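/- arXiv:0910.2013 — 2 statements merged into one kernel-verified Lean document; each statement's English description precedes it below -/
import Mathlib

section
/- For every admissible atomistic displacement u (i.e., u ∈ ℝ^{2N+3} with u_{−N−1} = u_{−N} = u_N = u_{N+1} = 0), the quadratic form of the linearized atomistic operator has the representation ⟨L^a u, u⟩ = A_F ‖u'‖_{ℓ²_ε}² − ε² φ''_{2F} ‖u''‖_{ℓ²_ε}², i.e., ε Σ_{j=−N+1}^{N−1} (L^a u)_j u_j = A_F · ε Σ_{ℓ=−N}^{N+1} (u'_ℓ)² − ε² φ''_{2F} · ε Σ_{ℓ=−N}^{N} (u''_ℓ)². -/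
/-!
Write `e = 1/N`. The identity is summation by parts done pointwise: at every site `ℓ`,
`(L^a u)_ℓ u_ℓ - A_F (u'_ℓ)² + e² φ''_{2F} (u''_ℓ)²` is the discrete derivative
`flux (ℓ + 1) - flux ℓ` of a quadratic form in `u_{ℓ-2}, …, u_{ℓ+1}` (`local_identity`).
Because of the boundary conditions the three sums can all be taken over `-N ≤ ℓ ≤ N`, so the sum
telescopes (`sum_Icc_int_telescope`), and every monomial of the flux at `-N` and at `N + 1`
contains one of the four vanishing boundary values.
-/

open Finset

noncomputable section

/-- lattice spacing ε = 1/N -/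
def eps (N : ℕ) : ℝ := 1 / N

/-- backward first difference u'_ℓ = (u_ℓ - u_{ℓ-1})/ε -/
def D1 (N : ℕ) (u : ℤ → ℝ) (ℓ : ℤ) : ℝ := (u ℓ - u (ℓ - 1)) / eps N

/-- centered second difference u''_ℓ = (u_{ℓ+1} - 2u_ℓ + u_{ℓ-1})/ε² -/
def D2 (N : ℕ) (u : ℤ → ℝ) (ℓ : ℤ) : ℝ :=
  (u (ℓ + 1) - 2 * u ℓ + u (ℓ - 1)) / (eps N) ^ 2

/-- linearized atomistic operator (L^a u)_j -/
def La (N : ℕ) (φF φ2F : ℝ) (u : ℤ → ℝ) (j : ℤ) : ℝ :=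
  φF * (-u (j + 1) + 2 * u j - u (j - 1)) / (eps N) ^ 2
    + φ2F * (-u (j + 2) + 2 * u j - u (j - 2)) / (eps N) ^ 2

/-- Quadratic flux whose forward difference is the defect between the energy density of the
operator and the density built from the first and second differences. -/
def flux (N : ℕ) (φF φ2F : ℝ) (u : ℤ → ℝ) (ℓ : ℤ) : ℝ :=
  (φF * (u (ℓ - 1) ^ 2 - u ℓ * u (ℓ - 1))
    + φ2F * (u ℓ ^ 2 + 3 * u (ℓ - 1) ^ 2 - 4 * u ℓ * u (ℓ - 1)
      - u (ℓ + 1) * u (ℓ - 1) + u ℓ * u (ℓ - 2))) / eps N ^ 2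

theorem local_identity (N : ℕ) (hN : eps N ≠ 0) (φF φ2F : ℝ) (u : ℤ → ℝ) (ℓ : ℤ) :
    La N φF φ2F u ℓ * u ℓ - (φF + 4 * φ2F) * D1 N u ℓ ^ 2 + eps N ^ 2 * φ2F * D2 N u ℓ ^ 2
      = flux N φF φ2F u (ℓ + 1) - flux N φF φ2F u ℓ := by
  have a1 : ℓ + 1 - 1 = ℓ := by ring
  have a2 : ℓ + 1 + 1 = ℓ + 2 := by ring
  have a3 : ℓ + 1 - 2 = ℓ - 1 := by ring
  simp only [La, D1, D2, flux, a1, a2, a3]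
  field_simp
  ring

theorem sum_Icc_int_succ (f : ℤ → ℝ) (a b : ℤ) (h : a ≤ b + 1) :
    ∑ ℓ ∈ Icc a (b + 1), f ℓ = ∑ ℓ ∈ Icc a b, f ℓ + f (b + 1) := by
  have : Icc a (b + 1) = insert (b + 1) (Icc a b) := by
    ext x; simp only [mem_insert, mem_Icc]; omega
  rw [this, sum_insert (by simp), add_comm]

theorem sum_Icc_int_telescope (G : ℤ → ℝ) (a b : ℤ) (h : a ≤ b) :
    ∑ ℓ ∈ Icc a b, (G (ℓ + 1) - G ℓ) = G (b + 1) - G a := by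
  induction b, h using Int.le_induction with
  | base => simp
  | succ b hb ih => rw [sum_Icc_int_succ _ _ _ (by omega), ih]; ring

/-- Representation of the quadratic form of the linearized atomistic operator:
`⟨L^a u, u⟩ = A_F ‖u'‖²_{ℓ²_ε} − ε² φ''_{2F} ‖u''‖²_{ℓ²_ε}` for all admissible displacements. -/
theorem stmt0 (N : ℕ) (hN : 2 ≤ N) (φF φ2F : ℝ) (u : ℤ → ℝ)
    (h1 : u (-(N : ℤ) - 1) = 0) (h2 : u (-(N : ℤ)) = 0)
    (h3 : u (N : ℤ) = 0) (h4 : u ((N : ℤ) + 1) = 0) :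
    eps N * ∑ j ∈ Icc (-(N : ℤ) + 1) ((N : ℤ) - 1), La N φF φ2F u j * u j
      = (φF + 4 * φ2F) * (eps N * ∑ ℓ ∈ Icc (-(N : ℤ)) ((N : ℤ) + 1), (D1 N u ℓ) ^ 2)
        - (eps N) ^ 2 * φ2F * (eps N * ∑ ℓ ∈ Icc (-(N : ℤ)) (N : ℤ), (D2 N u ℓ) ^ 2) := by
  have hε : eps N ≠ 0 := by
    have : (N : ℝ) ≠ 0 := by exact_mod_cast (by omega : N ≠ 0)
    simpa [eps] using this
  -- The two added sites `±N` contribute nothing, since `u` vanishes there.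
  have hL : ∑ j ∈ Icc (-(N : ℤ) + 1) ((N : ℤ) - 1), La N φF φ2F u j * u j
      = ∑ j ∈ Icc (-(N : ℤ)) (N : ℤ), La N φF φ2F u j * u j := by
    apply sum_subset
    · intro x; simp only [mem_Icc]; omega
    · intro x hx hx'
      simp only [mem_Icc] at hx hx'
      have hx2 : x = -(N : ℤ) ∨ x = N := by omega
      rcases hx2 with rfl | rfl
      · rw [h2, mul_zero]
      · rw [h3, mul_zero]
  have hD : ∑ ℓ ∈ Icc (-(N : ℤ)) ((N : ℤ) + 1), D1 N u ℓ ^ 2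
      = ∑ ℓ ∈ Icc (-(N : ℤ)) (N : ℤ), D1 N u ℓ ^ 2 := by
    rw [sum_Icc_int_succ _ _ _ (by omega)]
    simp [D1, h3, h4]
  have hT := sum_Icc_int_telescope (flux N φF φ2F u) (-(N : ℤ)) N (by omega)
  have hR : flux N φF φ2F u ((N : ℤ) + 1) = 0 := by
    simp [flux, h3, h4]
  have hL0 : flux N φF φ2F u (-(N : ℤ)) = 0 := by
    simp [flux, h1, h2]
  simp only [← local_identity N hε, sum_add_distrib, sum_sub_distrib, ← mul_sum, hR, hL0] at hT
  rw [hL, hD]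
  linear_combination eps N * hT

end
end

section
/- Define ν_ε = min{ ‖u''‖_{ℓ²_ε}² : u admissible, ‖u'‖_{ℓ²_ε} = 1 }. Then ν_ε > 0, there is a universal constant C > 0 (independent of N, φ''_F, φ''_{2F}) with ν_ε ≤ C, and if φ''_{2F} ≤ 0 then min{ ⟨L^a u, u⟩ : u admissible, ‖u'‖_{ℓ²_ε} = 1 } = A_F − ε² ν_ε φ''_{2F}. In particular this minimum lies in the interval [A_F, A_F − C ε² φ''_{2F}] and is strictly greater than A_F when φ''_{2F} < 0. -/
/-!
Summation by parts gives `⟨Lᵃu, u⟩ = A_F ‖u'‖² - ε² φ''_{2F} ‖u''‖²` for every admissible `u`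
(`qformA_eq`). For `φ''_{2F} ≤ 0` the quadratic form is thus, on the unit sphere `‖u'‖ = 1`, a
nondecreasing affine function of `‖u''‖²`, and such functions commute with infima of nonempty
sets bounded below.

Positivity of `ν_ε` is a discrete Poincaré inequality for `u'`, which vanishes at the left end:
`‖u'‖² ≤ 12 ‖u''‖²` (`dnormSqA_le`). The uniform upper bound comes from the quartic
`(N² - j²)((N + 1)² - j²) / N⁴`, which satisfies all four boundary conditions exactly, has
`|u''| ≤ 12`, and has `‖u'‖ ≥ 1` since it climbs from `0` to a value at least `1` over unit
length (`exists_adm`).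
-/

open Finset

noncomputable section

/-- admissible displacements: u_{-N-1} = u_{-N} = u_N = u_{N+1} = 0 -/
def adm (N : ℕ) (u : ℤ → ℝ) : Prop :=
  u (-(N : ℤ) - 1) = 0 ∧ u (-(N : ℤ)) = 0 ∧ u (N : ℤ) = 0 ∧ u ((N : ℤ) + 1) = 0

/-- ‖u'‖²_{ℓ²_ε} -/
def dnormSqA (N : ℕ) (u : ℤ → ℝ) : ℝ :=
  eps N * ∑ ℓ ∈ Icc (-(N : ℤ)) ((N : ℤ) + 1), (D1 N u ℓ) ^ 2

/-- ‖u''‖²_{ℓ²_ε} -/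
def ddnormSqA (N : ℕ) (u : ℤ → ℝ) : ℝ :=
  eps N * ∑ ℓ ∈ Icc (-(N : ℤ)) (N : ℤ), (D2 N u ℓ) ^ 2

/-- the quadratic form ⟨L^a u, u⟩ -/
def qformA (N : ℕ) (φF φ2F : ℝ) (u : ℤ → ℝ) : ℝ :=
  eps N * ∑ j ∈ Icc (-(N : ℤ) + 1) ((N : ℤ) - 1), La N φF φ2F u j * u j

/-- ν_ε = min { ‖u''‖²_{ℓ²_ε} : u admissible, ‖u'‖_{ℓ²_ε} = 1 } -/
def nuEps (N : ℕ) : ℝ :=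
  sInf {x : ℝ | ∃ u : ℤ → ℝ, adm N u ∧ dnormSqA N u = 1 ∧ x = ddnormSqA N u}

/-- min { ⟨L^a u, u⟩ : u admissible, ‖u'‖_{ℓ²_ε} = 1 } -/
def minA (N : ℕ) (φF φ2F : ℝ) : ℝ :=
  sInf {x : ℝ | ∃ u : ℤ → ℝ, adm N u ∧ dnormSqA N u = 1 ∧ x = qformA N φF φ2F u}

lemma sum_Icc_telescope (f : ℤ → ℝ) (a : ℤ) (n : ℕ) :
    ∑ j ∈ Icc a (a + n - 1), (f (j + 1) - f j) = f (a + n) - f a := by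
  induction n with
  | zero => simp
  | succ n ih =>
    have h : Icc a (a + ((n + 1 : ℕ) : ℤ) - 1) = insert (a + n) (Icc a (a + n - 1)) := by
      ext x; simp only [mem_Icc, mem_insert]; push_cast; omega
    rw [h, sum_insert (by simp), ih]
    push_cast
    rw [← add_assoc]; ring

lemma sum_Icc_left (f : ℤ → ℝ) {a b : ℤ} (h : a ≤ b) :
    ∑ j ∈ Icc a b, f j = f a + ∑ j ∈ Icc (a + 1) b, f j := by
  have : Icc a b = insert a (Icc (a + 1) b) := by
    ext x; simp only [mem_Icc, mem_insert]; omega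
  rw [this, sum_insert (by simp)]

lemma sum_Icc_right (f : ℤ → ℝ) {a b : ℤ} (h : a ≤ b) :
    ∑ j ∈ Icc a b, f j = f b + ∑ j ∈ Icc a (b - 1), f j := by
  have : Icc a b = insert b (Icc a (b - 1)) := by
    ext x; simp only [mem_Icc, mem_insert]; omega
  rw [this, sum_insert (by simp)]

lemma eps_pos {N : ℕ} (hN : 2 ≤ N) : 0 < eps N := by
  have : (0 : ℝ) < N := by exact_mod_cast (by omega : 0 < N)
  unfold eps; positivity

/-- The quadratic form splits as `A_F ‖u'‖² - ε² φ''_{2F} ‖u''‖²`. -/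
lemma qformA_eq {N : ℕ} (hN : 2 ≤ N) (φF φ2F : ℝ) {u : ℤ → ℝ} (hu : adm N u) :
    qformA N φF φ2F u
      = (φF + 4 * φ2F) * dnormSqA N u - (eps N) ^ 2 * φ2F * ddnormSqA N u := by
  obtain ⟨h1, h2, h3, h4⟩ := hu
  have he := (eps_pos hN).ne'
  -- The summand of the difference of the two sides, times `ε²`, is a forward difference of `F`.
  let F : ℤ → ℝ := fun j =>
    -φF * (u j * u (j - 1) - u (j - 1) ^ 2)
      + φ2F * (-u (j + 1) * u (j - 1) + u j * u (j - 2) - 4 * u j * u (j - 1)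
        + u j ^ 2 + 3 * u (j - 1) ^ 2)
  have hT := sum_Icc_telescope F (-(N : ℤ) + 1) (2 * N - 1)
  have e1 : -(N : ℤ) + 1 + ((2 * N - 1 : ℕ) : ℤ) = N := by omega
  rw [e1] at hT
  have key : ∑ j ∈ Icc (-(N : ℤ) + 1) ((N : ℤ) - 1), La N φF φ2F u j * u j
      = (φF + 4 * φ2F) * ∑ j ∈ Icc (-(N : ℤ) + 1) ((N : ℤ) - 1), D1 N u j ^ 2
        - (eps N) ^ 2 * φ2F * ∑ j ∈ Icc (-(N : ℤ) + 1) ((N : ℤ) - 1), D2 N u j ^ 2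
        + (F N - F (-(N : ℤ) + 1)) / (eps N) ^ 2 := by
    rw [← hT, mul_sum, mul_sum, sum_div, ← sum_sub_distrib, ← sum_add_distrib]
    refine sum_congr rfl fun j _ => ?_
    have a1 : j + 1 + 1 = j + 2 := by ring
    have a2 : j + 1 - 1 = j := by ring
    have a3 : j + 1 - 2 = j - 1 := by ring
    simp only [F, La, D1, D2, a1, a2, a3]
    field_simp
    ring
  have hF1 : F N - F (-(N : ℤ) + 1)
      = φF * u (N - 1) ^ 2 + φ2F * (3 * u (N - 1) ^ 2 - u (-N + 1) ^ 2) := by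
    have a1 : -(N : ℤ) + 1 - 1 = -N := by ring
    have a2 : -(N : ℤ) + 1 - 2 = -N - 1 := by ring
    simp only [F, a1, a2, h1, h2, h3, h4]
    ring
  have hD1 : ∑ j ∈ Icc (-(N : ℤ)) ((N : ℤ) + 1), D1 N u j ^ 2
      = u (N - 1) ^ 2 / (eps N) ^ 2
        + ∑ j ∈ Icc (-(N : ℤ) + 1) ((N : ℤ) - 1), D1 N u j ^ 2 := by
    rw [sum_Icc_left _ (by omega), sum_Icc_right _ (by omega), add_sub_cancel_right,
      sum_Icc_right _ (by omega)]
    simp only [D1, h1, h2, h3, h4, add_sub_cancel_right]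
    ring
  have hD2 : ∑ j ∈ Icc (-(N : ℤ)) (N : ℤ), D2 N u j ^ 2
      = (u (-N + 1) ^ 2 + u (N - 1) ^ 2) / (eps N) ^ 4
        + ∑ j ∈ Icc (-(N : ℤ) + 1) ((N : ℤ) - 1), D2 N u j ^ 2 := by
    rw [sum_Icc_left _ (by omega), sum_Icc_right _ (by omega)]
    simp only [D2, h1, h2, h3, h4]
    ring
  rw [qformA, dnormSqA, ddnormSqA, hD1, hD2, key, hF1]
  field_simp
  ring

/-- A discrete Poincaré inequality for `u'`. -/
lemma dnormSqA_le {N : ℕ} (hN : 2 ≤ N) {u : ℤ → ℝ} (hu : adm N u) :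
    dnormSqA N u ≤ 12 * ddnormSqA N u := by
  obtain ⟨h1, h2, -, -⟩ := hu
  have he := eps_pos hN
  have hN2 : (2 : ℝ) ≤ N := by exact_mod_cast hN
  have heN : eps N * N = 1 := by unfold eps; field_simp
  set S := ∑ ℓ ∈ Icc (-(N : ℤ)) (N : ℤ), D2 N u ℓ ^ 2 with hS
  have hS0 : 0 ≤ S := sum_nonneg fun _ _ => sq_nonneg _
  have hD : ∀ j, D1 N u (j + 1) - D1 N u j = eps N * D2 N u j := by
    intro j
    simp only [D1, D2, add_sub_cancel_right]
    field_simp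
    ring
  have hpt : ∀ ℓ ∈ Icc (-(N : ℤ)) ((N : ℤ) + 1),
      D1 N u ℓ ^ 2 ≤ (eps N) ^ 2 * ((2 * N + 1) * S) := by
    intro ℓ hℓ
    rw [mem_Icc] at hℓ
    obtain ⟨n, hn⟩ := Int.eq_ofNat_of_zero_le (by omega : 0 ≤ ℓ + N)
    have hT := sum_Icc_telescope (D1 N u) (-(N : ℤ)) n
    have e1 : -(N : ℤ) + n = ℓ := by omega
    have e2 : D1 N u (-(N : ℤ)) = 0 := by simp [D1, h1, h2]
    rw [e1, e2, sub_zero] at hT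
    simp only [hD] at hT
    rw [← mul_sum] at hT
    rw [← hT, mul_pow]
    have hcs := sq_sum_le_card_mul_sum_sq (s := Icc (-(N : ℤ)) (ℓ - 1)) (f := D2 N u)
    have hc : ((Icc (-(N : ℤ)) (ℓ - 1)).card : ℝ) ≤ 2 * N + 1 := by
      rw [Int.card_Icc]
      exact_mod_cast (by omega : (ℓ - 1 + 1 - -(N : ℤ)).toNat ≤ 2 * N + 1)
    have hsub : ∑ j ∈ Icc (-(N : ℤ)) (ℓ - 1), D2 N u j ^ 2 ≤ S :=
      sum_le_sum_of_subset_of_nonneg (Icc_subset_Icc le_rfl (by omega))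
        fun _ _ _ => sq_nonneg _
    gcongr
    refine hcs.trans ?_
    gcongr
  have hsum := sum_le_card_nsmul _ _ _ hpt
  rw [Int.card_Icc, nsmul_eq_mul] at hsum
  have hc : ((((N : ℤ) + 1 + 1 - -(N : ℤ)).toNat : ℕ) : ℝ) = 2 * N + 2 := by
    exact_mod_cast (by omega : ((N : ℤ) + 1 + 1 - -(N : ℤ)).toNat = 2 * N + 2)
  rw [hc] at hsum
  unfold dnormSqA ddnormSqA
  rw [← hS]
  calc eps N * ∑ ℓ ∈ Icc (-(N : ℤ)) ((N : ℤ) + 1), D1 N u ℓ ^ 2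
      ≤ eps N * ((2 * N + 2) * ((eps N) ^ 2 * ((2 * N + 1) * S))) := by gcongr
    _ = (eps N) ^ 2 * ((2 * N + 2) * (2 * N + 1)) * (eps N * S) := by ring
    _ ≤ (eps N) ^ 2 * (12 * N ^ 2) * (eps N * S) := by
        have : (2 * (N : ℝ) + 2) * (2 * N + 1) ≤ 12 * N ^ 2 := by nlinarith
        gcongr ?_ * ?_ * _
    _ = 12 * (eps N * N) ^ 2 * (eps N * S) := by ring
    _ = 12 * (eps N * S) := by rw [heN]; ring

lemma adm_smul {N : ℕ} {u : ℤ → ℝ} (hu : adm N u) (c : ℝ) : adm N (fun j => c * u j) := by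
  obtain ⟨h1, h2, h3, h4⟩ := hu
  simp [adm, h1, h2, h3, h4]

lemma dnormSqA_smul (N : ℕ) (u : ℤ → ℝ) (c : ℝ) :
    dnormSqA N (fun j => c * u j) = c ^ 2 * dnormSqA N u := by
  have h : ∀ j, D1 N (fun j => c * u j) j ^ 2 = c ^ 2 * D1 N u j ^ 2 := by
    intro j; simp only [D1]; ring
  simp only [dnormSqA, h, ← mul_sum]
  ring

lemma ddnormSqA_smul (N : ℕ) (u : ℤ → ℝ) (c : ℝ) :
    ddnormSqA N (fun j => c * u j) = c ^ 2 * ddnormSqA N u := by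
  have h : ∀ j, D2 N (fun j => c * u j) j ^ 2 = c ^ 2 * D2 N u j ^ 2 := by
    intro j; simp only [D2]; ring
  simp only [ddnormSqA, h, ← mul_sum]
  ring

/-- The quartic test displacement, before normalization. -/
lemma exists_adm_one_le {N : ℕ} (hN : 2 ≤ N) :
    ∃ u : ℤ → ℝ, adm N u ∧ 1 ≤ dnormSqA N u ∧ ddnormSqA N u ≤ 432 := by
  have he := eps_pos hN
  have hN2 : (2 : ℝ) ≤ N := by exact_mod_cast hN
  have heN : eps N * N = 1 := by unfold eps; field_simp
  let u : ℤ → ℝ := fun j =>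
    ((N : ℝ) ^ 2 - (j : ℝ) ^ 2) * (((N : ℝ) + 1) ^ 2 - (j : ℝ) ^ 2) / (N : ℝ) ^ 4
  have hu : adm N u := by
    refine ⟨?_, ?_, ?_, ?_⟩ <;> simp only [u] <;> push_cast <;> ring
  refine ⟨u, hu, ?_, ?_⟩
  · -- Cauchy–Schwarz on the left half of the chain, over which `u` rises from `0` to `u 0`.
    have hT := sum_Icc_telescope (fun j => u (j - 1)) (-(N : ℤ) + 1) N
    have e1 : -(N : ℤ) + 1 + N = 1 := by omega
    rw [e1] at hT
    simp only [sub_self, add_sub_cancel_right, hu.2.1, sub_zero] at hT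
    have hT' : eps N * ∑ j ∈ Icc (-(N : ℤ) + 1) 0, D1 N u j = u 0 := by
      rw [← hT, mul_sum]
      refine sum_congr rfl fun j _ => ?_
      unfold D1; field_simp
    have hu0 : 1 ≤ u 0 := by
      simp only [u]
      rw [le_div_iff₀ (by positivity)]
      push_cast
      nlinarith [pow_pos (by linarith : (0 : ℝ) < N) 2, pow_pos (by linarith : (0 : ℝ) < N) 3]
    have hcs := sq_sum_le_card_mul_sum_sq (s := Icc (-(N : ℤ) + 1) 0) (f := D1 N u)
    have hc : ((Icc (-(N : ℤ) + 1) 0).card : ℝ) = N := by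
      rw [Int.card_Icc]
      exact_mod_cast (by omega : (0 + 1 - (-(N : ℤ) + 1)).toNat = N)
    rw [hc] at hcs
    have hsub : ∑ j ∈ Icc (-(N : ℤ) + 1) 0, D1 N u j ^ 2
        ≤ ∑ j ∈ Icc (-(N : ℤ)) ((N : ℤ) + 1), D1 N u j ^ 2 :=
      sum_le_sum_of_subset_of_nonneg (Icc_subset_Icc (by omega) (by omega))
        fun _ _ _ => sq_nonneg _
    calc (1 : ℝ) ≤ u 0 ^ 2 := by nlinarith
      _ = (eps N) ^ 2 * (∑ j ∈ Icc (-(N : ℤ) + 1) 0, D1 N u j) ^ 2 := by rw [← hT']; ring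
      _ ≤ (eps N) ^ 2 * (N * ∑ j ∈ Icc (-(N : ℤ) + 1) 0, D1 N u j ^ 2) := by gcongr
      _ = (eps N * N) * (eps N * ∑ j ∈ Icc (-(N : ℤ) + 1) 0, D1 N u j ^ 2) := by ring
      _ = eps N * ∑ j ∈ Icc (-(N : ℤ) + 1) 0, D1 N u j ^ 2 := by rw [heN, one_mul]
      _ ≤ dnormSqA N u := by unfold dnormSqA; gcongr
  · have hpt : ∀ j ∈ Icc (-(N : ℤ)) (N : ℤ), D2 N u j ^ 2 ≤ 144 := by
      intro j hj
      rw [mem_Icc] at hj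
      have hj1 : -(N : ℝ) ≤ j := by exact_mod_cast hj.1
      have hj2 : (j : ℝ) ≤ N := by exact_mod_cast hj.2
      have hjsq : (j : ℝ) ^ 2 ≤ (N : ℝ) ^ 2 := by nlinarith
      have hval : D2 N u j = (12 * (j : ℝ) ^ 2 - 4 * N ^ 2 - 4 * N) / (N : ℝ) ^ 2 := by
        simp only [D2, u, eps]
        push_cast
        field_simp
        ring
      have hab : |D2 N u j| ≤ 12 := by
        rw [hval, abs_div, abs_of_pos (by positivity : (0 : ℝ) < (N : ℝ) ^ 2),
          div_le_iff₀ (by positivity), abs_le]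
        constructor <;> nlinarith [sq_nonneg (j : ℝ)]
      nlinarith [sq_abs (D2 N u j), abs_nonneg (D2 N u j)]
    have hsum := sum_le_card_nsmul _ _ _ hpt
    rw [Int.card_Icc, nsmul_eq_mul] at hsum
    have hc : ((((N : ℤ) + 1 - -(N : ℤ)).toNat : ℕ) : ℝ) = 2 * N + 1 := by
      exact_mod_cast (by omega : ((N : ℤ) + 1 - -(N : ℤ)).toNat = 2 * N + 1)
    rw [hc] at hsum
    calc ddnormSqA N u ≤ eps N * ((2 * N + 1) * 144) := by unfold ddnormSqA; gcongr
      _ ≤ eps N * (3 * N * 144) := by gcongr; linarith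
      _ = 432 * (eps N * N) := by ring
      _ = 432 := by rw [heN, mul_one]

lemma exists_adm {N : ℕ} (hN : 2 ≤ N) :
    ∃ u : ℤ → ℝ, adm N u ∧ dnormSqA N u = 1 ∧ ddnormSqA N u ≤ 432 := by
  obtain ⟨u, hu, h1, h2⟩ := exists_adm_one_le hN
  have hs : (√(dnormSqA N u))⁻¹ ^ 2 = (dnormSqA N u)⁻¹ := by
    rw [inv_pow, Real.sq_sqrt (by linarith)]
  refine ⟨_, adm_smul hu (√(dnormSqA N u))⁻¹, ?_, ?_⟩
  · rw [dnormSqA_smul, hs, inv_mul_cancel₀ (by linarith)]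
  · rw [ddnormSqA_smul, hs, inv_mul_le_iff₀ (by linarith)]
    nlinarith


/-- ν_ε > 0, ν_ε ≤ C for a universal constant C (independent of N, φ''_F, φ''_{2F}),
and if φ''_{2F} ≤ 0 then min ⟨L^a u, u⟩ over the unit sphere ‖u'‖ = 1 equals
A_F − ε² ν_ε φ''_{2F}; in particular this minimum lies in [A_F, A_F − C ε² φ''_{2F}]
and is strictly greater than A_F when φ''_{2F} < 0. -/
theorem stmt1 :
    ∃ C : ℝ, 0 < C ∧ ∀ N : ℕ, 2 ≤ N →
      0 < nuEps N ∧ nuEps N ≤ C ∧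
      ∀ φF φ2F : ℝ, φ2F ≤ 0 →
        minA N φF φ2F = (φF + 4 * φ2F) - (eps N) ^ 2 * nuEps N * φ2F
        ∧ (φF + 4 * φ2F) ≤ minA N φF φ2F
        ∧ minA N φF φ2F ≤ (φF + 4 * φ2F) - C * (eps N) ^ 2 * φ2F
        ∧ (φ2F < 0 → (φF + 4 * φ2F) < minA N φF φ2F) := by
  refine ⟨432, by norm_num, fun N hN => ?_⟩
  have he := eps_pos hN
  obtain ⟨u₀, hu₀, hu₀1, hu₀2⟩ := exists_adm hN
  set S : Set ℝ := {x : ℝ | ∃ u : ℤ → ℝ, adm N u ∧ dnormSqA N u = 1 ∧ x = ddnormSqA N u}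
    with hS
  have hnu : nuEps N = sInf S := rfl
  have hne : S.Nonempty := ⟨_, u₀, hu₀, hu₀1, rfl⟩
  have hlow : ∀ x ∈ S, 1 / 12 ≤ x := by
    rintro x ⟨u, hu, hu1, rfl⟩
    have := dnormSqA_le hN hu
    linarith
  have hbdd : BddBelow S := ⟨_, hlow⟩
  have hpos : 0 < nuEps N := by
    have := le_csInf hne hlow
    rw [hnu]; linarith
  have hle : nuEps N ≤ 432 := (csInf_le hbdd ⟨u₀, hu₀, hu₀1, rfl⟩).trans hu₀2
  refine ⟨hpos, hle, fun φF φ2F hφ => ?_⟩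
  have hmin : minA N φF φ2F = (φF + 4 * φ2F) - (eps N) ^ 2 * nuEps N * φ2F := by
    have hb : 0 ≤ -((eps N) ^ 2 * φ2F) := by nlinarith [sq_nonneg (eps N)]
    let g : ℝ → ℝ := fun x => (φF + 4 * φ2F) + -((eps N) ^ 2 * φ2F) * x
    have hg : Monotone g := fun x y hxy => by simp only [g]; gcongr
    have himg : {x : ℝ | ∃ u : ℤ → ℝ, adm N u ∧ dnormSqA N u = 1 ∧ x = qformA N φF φ2F u}
        = g '' S := by
      have hq : ∀ u, adm N u → dnormSqA N u = 1 → qformA N φF φ2F u = g (ddnormSqA N u) := by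
        intro u hu hu1
        rw [qformA_eq hN φF φ2F hu, hu1]
        simp only [g]; ring
      ext x
      constructor
      · rintro ⟨u, hu, hu1, rfl⟩
        exact ⟨_, ⟨u, hu, hu1, rfl⟩, (hq u hu hu1).symm⟩
      · rintro ⟨_, ⟨u, hu, hu1, rfl⟩, rfl⟩
        exact ⟨u, hu, hu1, (hq u hu hu1).symm⟩
    have hcont : ContinuousAt g (sInf S) := by
      apply Continuous.continuousAt; fun_prop
    rw [minA, himg, ← hg.map_csInf_of_continuousAt hcont hne hbdd, ← hnu]
    simp only [g]; ring
  have hb : 0 ≤ (eps N) ^ 2 * -φ2F := mul_nonneg (sq_nonneg _) (by linarith)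
  refine ⟨hmin, ?_, ?_, fun hlt => ?_⟩
  · rw [hmin]; nlinarith [mul_nonneg hb hpos.le]
  · rw [hmin]; nlinarith [mul_le_mul_of_nonneg_left hle hb]
  · have : 0 < (eps N) ^ 2 * -φ2F * nuEps N :=
      mul_pos (mul_pos (pow_pos he 2) (by linarith)) hpos
    rw [hmin]; linarith


end
end
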